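/- Let W be a nonempty string, a a symbol, and W' = W ++ [a]. Let k = k(W) be the active position of W, i.e., the least index k such that the suffix W[k:] occurs at least twice in W. Then for every j with 1 ≤ j < k − 1, the suffix W[j:] (a leaf of preLST(W)) is not a node of preLST(W'): it is neither a type-1 nor a type-2 node of preLST(W'). -/

import Mathlib

/-- `U` is right-branching in `T`: there are distinct symbols `a ≠ b` with both
`U ++ [a]` and `U ++ [b]` infixes of `T`. -/
def RightBranching {σ : Type*} (T U : List σ) : Prop :=
  ∃ a b : σ, a ≠ b ∧ (U ++ [a]) <:+: T ∧ (U ++ [b]) <:+: T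

/-- `U` is a type-1 node of `LST(T)`. -/
def LType1 {σ : Type*} (T U : List σ) : Prop :=
  U <:+: T ∧ (U = [] ∨ U <:+ T ∨ RightBranching T U)

/-- `U` is a type-2 node of `LST(T)`. -/
def LType2 {σ : Type*} (T U : List σ) : Prop :=
  U <:+: T ∧ ¬ LType1 T U ∧ LType1 T U.tail

/-- `U` is a node of `LST(T)`: type-1 or type-2. -/
def LNode {σ : Type*} (T U : List σ) : Prop :=
  LType1 T U ∨ LType2 T U

/-- `U` occurs in `T` at (0-based) position `p`. -/
def OccursAt {σ : Type*} (T U : List σ) (p : ℕ) : Prop :=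
  U <+: T.drop p ∧ p + U.length ≤ T.length

/-- `U` occurs exactly once in `T`. -/
def OccursOnce {σ : Type*} (T U : List σ) : Prop :=
  ∃! p : ℕ, OccursAt T U p

/-- `U` occurs at least twice in `T`. -/
def OccursTwice {σ : Type*} (T U : List σ) : Prop :=
  ∃ p q : ℕ, p ≠ q ∧ OccursAt T U p ∧ OccursAt T U q

/-- `U` is a type-1 node of `preLST(T)`. -/
def PType1 {σ : Type*} (T U : List σ) : Prop :=
  U <:+: T ∧ (U = [] ∨ RightBranching T U ∨ (U ≠ [] ∧ U <:+ T ∧ OccursOnce T U))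

/-- `U` is a type-2 node of `preLST(T)`. -/
def PType2 {σ : Type*} (T U : List σ) : Prop :=
  U <:+: T ∧ ¬ PType1 T U ∧ PType1 T U.tail

/-- `U` is a node of `preLST(T)`: type-1 or type-2. -/
def PNode {σ : Type*} (T U : List σ) : Prop :=
  PType1 T U ∨ PType2 T U

/-! If `U` occurs only once in `W`, appending `a` cannot make it branch: two occurrences of `U` in
`W ++ [a]` with different continuations start at different positions, and dropping the
continuations puts both of them inside `W`. Nor can `U` become a suffix occurring once, because its
occurrence inside `W` ends before the new last symbol. Hence `U` is not a type-1 node of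
`preLST(W ++ [a])`. A type-2 node has a type-1 tail, and a string whose tail occurs only once
itself occurs only once, so it suffices that the tail of the string does not repeat in `W`. -/

section Occurrences

variable {σ : Type*} {T U V : List σ} {p : ℕ}

theorem exists_occursAt_of_isInfix (h : U <:+: T) : ∃ p, OccursAt T U p := by
  obtain ⟨X, Y, rfl⟩ := h
  exact ⟨X.length, by simp, by simp⟩

theorem occursAt_of_isSuffix (h : U <:+ T) : OccursAt T U (T.length - U.length) := by
  obtain ⟨X, rfl⟩ := h
  exact ⟨by simp, by simp⟩

theorem OccursAt.eq_of_length_eq (hU : OccursAt T U p) (hV : OccursAt T V p)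
    (hlen : U.length = V.length) : U = V :=
  (List.prefix_of_prefix_length_le hU.1 hV.1 hlen.le).eq_of_length hlen

theorem OccursAt.of_append_left (h : OccursAt T (U ++ V) p) : OccursAt T U p :=
  ⟨(List.prefix_append U V).trans h.1, by have := h.2; rw [List.length_append] at this; omega⟩

theorem OccursAt.of_append_right (h : OccursAt T (U ++ V) p) : OccursAt T V (p + U.length) := by
  obtain ⟨⟨Y, hY⟩, hle⟩ := h
  refine ⟨⟨Y, ?_⟩, by rw [List.length_append] at hle; omega⟩
  rw [← List.drop_drop, ← hY, List.append_assoc, List.drop_left]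

theorem occursAt_append_iff_of_le (S : List σ) (hle : p + U.length ≤ T.length) :
    OccursAt (T ++ S) U p ↔ OccursAt T U p := by
  have hlen : U.length ≤ (T.drop p).length := by rw [List.length_drop]; omega
  have hle' : p + U.length ≤ (T ++ S).length := by rw [List.length_append]; omega
  rw [OccursAt, OccursAt, List.drop_append_of_le_length (by omega)]
  simp only [hle, hle', and_true]
  exact ⟨fun h => List.prefix_of_prefix_length_le h (List.prefix_append _ _) hlen,
    fun h => h.trans (List.prefix_append _ _)⟩

theorem occursTwice_nil (hT : T ≠ []) : OccursTwice T [] :=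
  ⟨0, 1, zero_ne_one, ⟨List.nil_prefix, Nat.zero_le _⟩,
    ⟨List.nil_prefix, List.length_pos_iff.mpr hT⟩⟩

theorem OccursTwice.of_isSuffix (h : OccursTwice T V) (hUV : U <:+ V) : OccursTwice T U := by
  obtain ⟨X, rfl⟩ := hUV
  obtain ⟨p, q, hpq, hp, hq⟩ := h
  exact ⟨p + X.length, q + X.length, by omega, hp.of_append_right, hq.of_append_right⟩

end Occurrences

section AppendSymbol

variable {σ : Type*} {W U : List σ} {a : σ}

theorem OccursAt.of_append_singleton {b : σ} {p : ℕ}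
    (h : OccursAt (W ++ [a]) (U ++ [b]) p) : OccursAt W U p := by
  have hle : p + U.length ≤ W.length := by
    have := h.2
    simp only [List.length_append, List.length_singleton] at this
    omega
  exact (occursAt_append_iff_of_le [a] hle).mp h.of_append_left

theorem RightBranching.occursTwice_of_append_singleton (h : RightBranching (W ++ [a]) U) :
    OccursTwice W U := by
  obtain ⟨b, c, hbc, hb, hc⟩ := h
  obtain ⟨p, hp⟩ := exists_occursAt_of_isInfix hb
  obtain ⟨q, hq⟩ := exists_occursAt_of_isInfix hc
  refine ⟨p, q, ?_, hp.of_append_singleton, hq.of_append_singleton⟩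
  rintro rfl
  have hext : U ++ [b] = U ++ [c] := hp.eq_of_length_eq hq (by simp)
  exact hbc (by simpa using hext)

theorem not_occursOnce_append_singleton (hU : U <:+: W) (hsuf : U <:+ W ++ [a]) :
    ¬ OccursOnce (W ++ [a]) U := by
  intro honce
  obtain ⟨p, hp⟩ := exists_occursAt_of_isInfix hU
  have hpos : p = (W ++ [a]).length - U.length :=
    honce.unique ((occursAt_append_iff_of_le [a] hp.2).mpr hp) (occursAt_of_isSuffix hsuf)
  have hle := hp.2
  simp only [List.length_append, List.length_singleton] at hpos
  omega

theorem not_pType1_append_singleton (hW : W ≠ []) (hU : U <:+: W) (h : ¬ OccursTwice W U) :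
    ¬ PType1 (W ++ [a]) U := by
  rintro ⟨-, rfl | hbranch | ⟨-, hsuf, honce⟩⟩
  · exact h (occursTwice_nil hW)
  · exact h hbranch.occursTwice_of_append_singleton
  · exact not_occursOnce_append_singleton hU hsuf honce

theorem stmt_8_general (hW : W ≠ []) (hU : U <:+: W) (h : ¬ OccursTwice W U.tail) :
    ¬ PNode (W ++ [a]) U := by
  have htail : U.tail <:+ U := List.tail_suffix U
  rintro (htype1 | ⟨-, -, htype1⟩)
  · exact not_pType1_append_singleton hW hU (fun h' => h (h'.of_isSuffix htail)) htype1
  · exact not_pType1_append_singleton hW (htail.isInfix.trans hU) h htype1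

end AppendSymbol

/-- Let `k` be the active position of a nonempty string `W` and
`W' = W ++ [a]`.  For every `1 ≤ j < k - 1`, the leaf `W[j:]` of `preLST(W)` is
not a node of `preLST(W')`. -/
theorem stmt_8 {σ : Type*} [DecidableEq σ] (W : List σ) (hne : W ≠ []) (a : σ)
    (k : ℕ) (hk1 : 1 ≤ k) (hk2 : k ≤ W.length + 1)
    (hkocc : OccursTwice W (W.drop (k - 1)))
    (hkmin : ∀ j : ℕ, 1 ≤ j → j < k → ¬ OccursTwice W (W.drop (j - 1))) :
    ∀ j : ℕ, 1 ≤ j → j + 1 < k → ¬ PNode (W ++ [a]) (W.drop (j - 1)) := by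
  intro j hj hjk
  have htail : (W.drop (j - 1)).tail = W.drop j := by rw [List.tail_drop, Nat.sub_add_cancel hj]
  exact stmt_8_general hne (List.drop_suffix _ W).isInfix (htail ▸ hkmin (j + 1) (by omega) hjk)
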